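/- Let λ > 0 and Ω > 0 be real numbers. Define the rescaled Geroch potential φ̃_G = Ω^{-1/2}·λ^{-1/4}·(1 - √λ) and the rescaled (static) Hansen potential φ̃_H = Ω^{-1/2}·(1 - λ²)/(4λ). Then φ̃_H = (φ̃_G/4)·(Ω·φ̃_G² + 2)·√(Ω·φ̃_G² + 4). -/

import Mathlib

/-- For `λ > 0`, `Ω > 0`, the rescaled Geroch potential
`φ̃_G = Ω^{-1/2}·λ^{-1/4}·(1-√λ)` and rescaled static Hansen potential
`φ̃_H = Ω^{-1/2}·(1-λ²)/(4λ)` satisfy `φ̃_H = (φ̃_G/4)·(Ω·φ̃_G²+2)·√(Ω·φ̃_G²+4)`. -/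
theorem stmt_17 (l Ω : ℝ) (hl : 0 < l) (hΩ : 0 < Ω)
    (φG φH : ℝ)
    (hG : φG = Ω ^ (-(1 / 2) : ℝ) * l ^ (-(1 / 4) : ℝ) * (1 - Real.sqrt l))
    (hH : φH = Ω ^ (-(1 / 2) : ℝ) * ((1 - l ^ 2) / (4 * l))) :
    φH = φG / 4 * (Ω * φG ^ 2 + 2) * Real.sqrt (Ω * φG ^ 2 + 4) := by
  obtain ⟨a, ha, rfl⟩ : ∃ a : ℝ, 0 < a ∧ l = a ^ 4 :=
    ⟨l ^ (1 / 4 : ℝ), Real.rpow_pos_of_pos hl _, by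
      rw [← Real.rpow_natCast, ← Real.rpow_mul hl.le]; norm_num⟩
  have hquarter : (a ^ 4) ^ (-(1 / 4) : ℝ) = a⁻¹ := by
    rw [← Real.rpow_natCast, ← Real.rpow_mul ha.le, ← Real.rpow_neg_one]; norm_num
  have hsqrt : Real.sqrt (a ^ 4) = a ^ 2 := by
    rw [show a ^ 4 = (a ^ 2) ^ 2 by ring, Real.sqrt_sq (by positivity)]
  have hw : Ω * (Ω ^ (-(1 / 2) : ℝ)) ^ 2 = 1 := by
    rw [← Real.rpow_natCast, ← Real.rpow_mul hΩ.le]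
    norm_num [Real.rpow_neg_one, hΩ.ne']
  rw [hquarter, hsqrt] at hG
  generalize Ω ^ (-(1 / 2) : ℝ) = w at hG hH hw
  have hsq : Ω * φG ^ 2 = (a⁻¹ * (1 - a ^ 2)) ^ 2 := by
    rw [hG]; linear_combination (a⁻¹ * (1 - a ^ 2)) ^ 2 * hw
  have hroot : Real.sqrt (Ω * φG ^ 2 + 4) = (1 + a ^ 2) / a := by
    rw [hsq, show (a⁻¹ * (1 - a ^ 2)) ^ 2 + 4 = ((1 + a ^ 2) / a) ^ 2 by field_simp; ring,
      Real.sqrt_sq (by positivity)]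
  rw [hroot, hsq, hG, hH]
  field_simp
  ring
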